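/- Assume φ0 and φ1 are continuous. For t ∈ ℝ define A11(t) = ∫_{−∞}^{t} φ0(y) dy, A22(t) = ∫_{t}^{∞} φ1(y) dy, q0(t) = p0·A11(t) + p1·(1−A22(t)), and the single-threshold mutual information I_1(t) = H_b(q0(t)) − p0·H_b(A11(t)) − p1·H_b(A22(t)). If A11(t), A22(t), q0(t) ∈ (0,1), then I_1 is differentiable at t with derivative I_1'(t) = p0·φ0(t)·[log((1−q0(t))/q0(t)) − log((1−A11(t))/A11(t))] + p1·φ1(t)·[log((1−q0(t))/q0(t)) + log((1−A22(t))/A22(t))]. -/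

import Mathlib

/-! By the fundamental theorem of calculus, `A11` and `A22` have derivatives `φ0 t` and `-φ1 t`,
so `q0` has derivative `p0 * φ0 t + p1 * φ1 t`. On `(0, 1)` the binary entropy has derivative
`log ((1 - w) / w)`, and the formula for `I1` is the chain rule. -/

open MeasureTheory Real Set Filter

/-- Binary entropy function. -/
noncomputable def Hb (w : ℝ) : ℝ := -(w * Real.log w) - (1 - w) * Real.log (1 - w)

/-- `A11 t = ∫_{-∞}^t φ0`. -/
noncomputable def A11 (φ0 : ℝ → ℝ) (t : ℝ) : ℝ := ∫ y in Set.Iio t, φ0 y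

/-- `A22 t = ∫_t^∞ φ1`. -/
noncomputable def A22 (φ1 : ℝ → ℝ) (t : ℝ) : ℝ := ∫ y in Set.Ioi t, φ1 y

noncomputable def q0 (p0 p1 : ℝ) (φ0 φ1 : ℝ → ℝ) (t : ℝ) : ℝ :=
  p0 * A11 φ0 t + p1 * (1 - A22 φ1 t)

/-- Single-threshold mutual information. -/
noncomputable def I1 (p0 p1 : ℝ) (φ0 φ1 : ℝ → ℝ) (t : ℝ) : ℝ :=
  Hb (q0 p0 p1 φ0 φ1 t) - p0 * Hb (A11 φ0 t) - p1 * Hb (A22 φ1 t)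

lemma hasDerivAt_Hb {w : ℝ} (hw : w ∈ Set.Ioo (0:ℝ) 1) :
    HasDerivAt Hb (Real.log ((1 - w) / w)) w := by
  have h0 : w ≠ 0 := hw.1.ne'
  have h1 : 1 - w ≠ 0 := (sub_pos.2 hw.2).ne'
  have hsub : HasDerivAt (fun x : ℝ => 1 - x) (-1) w := by
    simpa using (hasDerivAt_id w).const_sub 1
  have h := (Real.hasDerivAt_mul_log h0).neg.sub ((Real.hasDerivAt_mul_log h1).comp w hsub)
  rw [Real.log_div h1 h0]
  exact h.congr_deriv (by ring)

lemma hasDerivAt_A22 {φ : ℝ → ℝ} (hi : Integrable φ) (hc : Continuous φ) (t : ℝ) :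
    HasDerivAt (A22 φ) (-φ t) t := by
  have h : A22 φ = fun u => A22 φ t - ∫ x in t..u, φ x := by
    funext u
    have := intervalIntegral.integral_Ioi_sub_Ioi' (a := t) (b := u)
      hi.integrableOn hi.integrableOn
    simp only [A22]
    linarith
  rw [h]
  exact (hc.integral_hasStrictDerivAt t t).hasDerivAt.const_sub _

lemma hasDerivAt_A11 {φ : ℝ → ℝ} (hi : Integrable φ) (hc : Continuous φ) (t : ℝ) :
    HasDerivAt (A11 φ) (φ t) t := by
  have h : A11 φ = fun u => (∫ x, φ x) - A22 φ u := by
    funext u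
    have := intervalIntegral.integral_Iic_add_Ioi (b := u) hi.integrableOn hi.integrableOn
    simp only [A11, A22, ← integral_Iic_eq_integral_Iio]
    linarith
  rw [h]
  simpa using (hasDerivAt_A22 hi hc t).const_sub (∫ x, φ x)

theorem stmt_1
    (p0 p1 : ℝ) (hp0 : p0 ∈ Set.Ioo (0:ℝ) 1) (hp1 : p1 ∈ Set.Ioo (0:ℝ) 1)
    (hp : p0 + p1 = 1)
    (φ0 φ1 : ℝ → ℝ) (hφ0 : ∀ y, 0 ≤ φ0 y) (hφ1 : ∀ y, 0 ≤ φ1 y)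
    (hi0 : Integrable φ0) (hi1 : Integrable φ1)
    (hI0 : ∫ y, φ0 y = 1) (hI1 : ∫ y, φ1 y = 1)
    (hc0 : Continuous φ0) (hc1 : Continuous φ1)
    (t : ℝ)
    (hA11 : A11 φ0 t ∈ Set.Ioo (0:ℝ) 1)
    (hA22 : A22 φ1 t ∈ Set.Ioo (0:ℝ) 1)
    (hq0 : q0 p0 p1 φ0 φ1 t ∈ Set.Ioo (0:ℝ) 1) :
    HasDerivAt (I1 p0 p1 φ0 φ1)
      (p0 * φ0 t *
          (Real.log ((1 - q0 p0 p1 φ0 φ1 t) / q0 p0 p1 φ0 φ1 t) -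
            Real.log ((1 - A11 φ0 t) / A11 φ0 t)) +
        p1 * φ1 t *
          (Real.log ((1 - q0 p0 p1 φ0 φ1 t) / q0 p0 p1 φ0 φ1 t) +
            Real.log ((1 - A22 φ1 t) / A22 φ1 t))) t := by
  have h11 := hasDerivAt_A11 hi0 hc0 t
  have h22 := hasDerivAt_A22 hi1 hc1 t
  have hq : HasDerivAt (q0 p0 p1 φ0 φ1) (p0 * φ0 t + p1 * φ1 t) t :=
    ((h11.const_mul p0).add ((h22.const_sub 1).const_mul p1)).congr_deriv (by ring)
  have h := (((hasDerivAt_Hb hq0).comp t hq).sub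
    (((hasDerivAt_Hb hA11).comp t h11).const_mul p0)).sub
    (((hasDerivAt_Hb hA22).comp t h22).const_mul p1)
  exact h.congr_deriv (by ring)
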